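/- arXiv:2512.08182 — 2 statements merged into one kernel-verified Lean document; each statement's English description precedes it below -/
import Mathlib

section
/- Let v_1, …, v_n ∈ R^r, let m, n be positive integers with N = n·m, and suppose λ ∈ R^r satisfies 1 + λ' v_i > 0 for every i and (1/n) Σ_{i=1}^n v_i/(1 + λ' v_i) = 0. Define q_i = 1/(N (1 + λ' v_i)) for i = 1, …, n. Then q_i > 0 for all i, Σ_{i=1}^n q_i = 1/m, Σ_{i=1}^n q_i v_i = 0, and for every vector (p_1, …, p_n) with p_i ≥ 0, Σ_{i=1}^n p_i = 1/m and Σ_{i=1}^n p_i v_i = 0 one has Π_{i=1}^n p_i^m ≤ Π_{i=1}^n q_i^m; that is, the weights q_i maximize the grouped empirical likelihood Π_{i=1}^n q_i^m subject to the nonnegativity, normalization, and estimating-equation constraints. -/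
open Finset Matrix

/-- **Grouped empirical likelihood weights are optimal.**
If `λ` satisfies the grouped empirical likelihood estimating equation
`(1/n) ∑ᵢ vᵢ / (1 + λ'vᵢ) = 0` with `1 + λ'vᵢ > 0` for every `i`, then the weights
`qᵢ = 1/(N (1 + λ'vᵢ))` (with `N = n·m`) are positive, sum to `1/m`, satisfy the
estimating-equation constraint `∑ᵢ qᵢ vᵢ = 0`, and maximize the grouped empirical
likelihood `∏ᵢ qᵢ^m` over all weight vectors satisfying the nonnegativity,
normalization, and estimating-equation constraints. -/
theorem gel_weights_maximize_likelihood
    {r n m : ℕ} (hn : 0 < n) (hm : 0 < m)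
    (v : Fin n → Fin r → ℝ) (lam : Fin r → ℝ)
    (hpos : ∀ i, 0 < 1 + lam ⬝ᵥ v i)
    (heq : ((n : ℝ))⁻¹ • ∑ i, (1 + lam ⬝ᵥ v i)⁻¹ • v i = (0 : Fin r → ℝ)) :
    (∀ i, 0 < (1 : ℝ) / ((n * m : ℕ) * (1 + lam ⬝ᵥ v i))) ∧
    (∑ i, (1 : ℝ) / ((n * m : ℕ) * (1 + lam ⬝ᵥ v i)) = 1 / m) ∧
    (∑ i, ((1 : ℝ) / ((n * m : ℕ) * (1 + lam ⬝ᵥ v i))) • v i = (0 : Fin r → ℝ)) ∧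
    (∀ p : Fin n → ℝ, (∀ i, 0 ≤ p i) → (∑ i, p i = 1 / m) →
      (∑ i, p i • v i = (0 : Fin r → ℝ)) →
      ∏ i, p i ^ m ≤ ∏ i, ((1 : ℝ) / ((n * m : ℕ) * (1 + lam ⬝ᵥ v i))) ^ m) := by
  have hnR : (0 : ℝ) < n := by exact_mod_cast hn
  have hmR : (0 : ℝ) < m := by exact_mod_cast hm
  have hN : (0 : ℝ) < ((n * m : ℕ) : ℝ) := by exact_mod_cast Nat.mul_pos hn hm
  have hS : ∑ i, (1 + lam ⬝ᵥ v i)⁻¹ • v i = (0 : Fin r → ℝ) :=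
    (smul_eq_zero.mp heq).resolve_left (inv_ne_zero hnR.ne')
  have hdot : ∀ c : Fin n → ℝ, ∑ i, c i • v i = (0 : Fin r → ℝ) →
      ∑ i, c i * (lam ⬝ᵥ v i) = 0 := by
    intro c hc
    have h := congrArg (fun x => lam ⬝ᵥ x) hc
    simpa [dotProduct_sum, dotProduct_smul] using h
  have hq : ∀ i, (1 : ℝ) / ((n * m : ℕ) * (1 + lam ⬝ᵥ v i))
      = ((n * m : ℕ) : ℝ)⁻¹ * (1 + lam ⬝ᵥ v i)⁻¹ := by
    intro i
    rw [one_div, mul_inv]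
  have hqpos : ∀ i, 0 < (1 : ℝ) / ((n * m : ℕ) * (1 + lam ⬝ᵥ v i)) :=
    fun i => one_div_pos.mpr (mul_pos hN (hpos i))
  refine ⟨hqpos, ?_, ?_, ?_⟩
  · have h1 : ∑ i, (1 + lam ⬝ᵥ v i)⁻¹ = (n : ℝ) := by
      have h2 : ∑ i, ((1 + lam ⬝ᵥ v i)⁻¹ + (1 + lam ⬝ᵥ v i)⁻¹ * (lam ⬝ᵥ v i))
          = ∑ _i : Fin n, (1 : ℝ) := by
        refine Finset.sum_congr rfl fun i _ => ?_
        have := inv_mul_cancel₀ (hpos i).ne'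
        linarith
      rw [Finset.sum_add_distrib, hdot _ hS] at h2
      simpa using h2
    simp_rw [hq]
    rw [← Finset.mul_sum, h1]
    push_cast
    field_simp
  · simp_rw [hq, mul_smul]
    rw [← Finset.smul_sum, hS, smul_zero]
  · intro p hp hsum hpv
    rw [Finset.prod_pow, Finset.prod_pow]
    refine pow_le_pow_left₀ (Finset.prod_nonneg fun i _ => hp i) ?_ m
    have ht : ∏ i, (p i * ((n * m : ℕ) * (1 + lam ⬝ᵥ v i))) ≤ 1 := by
      calc ∏ i, (p i * ((n * m : ℕ) * (1 + lam ⬝ᵥ v i)))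
          ≤ ∏ i, Real.exp (p i * ((n * m : ℕ) * (1 + lam ⬝ᵥ v i)) - 1) := by
            refine Finset.prod_le_prod
              (fun i _ => mul_nonneg (hp i) (mul_pos hN (hpos i)).le) fun i _ => ?_
            have := Real.add_one_le_exp (p i * ((n * m : ℕ) * (1 + lam ⬝ᵥ v i)) - 1)
            linarith
        _ = 1 := by
            rw [← Real.exp_sum, Real.exp_eq_one_iff]
            have h3 : ∑ i, (p i * ((n * m : ℕ) * (1 + lam ⬝ᵥ v i)) - 1)
                = ((n * m : ℕ) : ℝ) * (∑ i, p i + ∑ i, p i * (lam ⬝ᵥ v i)) - n := by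
              rw [Finset.sum_sub_distrib, ← Finset.sum_add_distrib, Finset.mul_sum]
              congr 1
              · exact Finset.sum_congr rfl fun i _ => by ring
              · simp
            rw [h3, hdot p hpv, hsum]
            push_cast
            field_simp
            ring
    have hsplit : ∏ i, p i = (∏ i, (p i * ((n * m : ℕ) * (1 + lam ⬝ᵥ v i)))) *
        ∏ i, (1 : ℝ) / ((n * m : ℕ) * (1 + lam ⬝ᵥ v i)) := by
      rw [← Finset.prod_mul_distrib]
      refine Finset.prod_congr rfl fun i _ => ?_
      rw [mul_assoc, mul_one_div_cancel (mul_pos hN (hpos i)).ne', mul_one]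
    rw [hsplit]
    exact mul_le_of_le_one_left (Finset.prod_nonneg fun i _ => (hqpos i).le) ht
end

section
/- Let v_1, …, v_n ∈ R^r and let λ ∈ R^r, λ ≠ 0, satisfy 1 + λ' v_i > 0 for every i and Σ_{i=1}^n v_i / (1 + λ' v_i) = 0. Write u = λ/‖λ‖, v̄ = (1/n) Σ_{i=1}^n v_i, S = (1/n) Σ_{i=1}^n v_i v_i', and Z* = max_{1 ≤ i ≤ n} ‖v_i‖. Then u' v̄ ≥ 0 and ‖λ‖ ( u' S u − Z* · u' v̄ ) ≤ u' v̄. -/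
open Finset
open scoped RealInnerProductSpace

/-- **Deterministic bound on the norm of the empirical likelihood Lagrange multiplier.**
If `λ ≠ 0` satisfies `1 + λ'vᵢ > 0` for all `i` and `∑ᵢ vᵢ/(1 + λ'vᵢ) = 0`, then with
`u = λ/‖λ‖`, `v̄ = (1/n)∑ᵢ vᵢ`, `u'Su = (1/n)∑ᵢ (u'vᵢ)²` and `Z* = maxᵢ ‖vᵢ‖`, one has
`u'v̄ ≥ 0` and `‖λ‖ (u'Su − Z*·u'v̄) ≤ u'v̄`. -/
theorem el_lambda_norm_bound
    {r n : ℕ} (hn : 0 < n)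
    (v : Fin n → EuclideanSpace ℝ (Fin r))
    (lam : EuclideanSpace ℝ (Fin r)) (hlam : lam ≠ 0)
    (hpos : ∀ i, 0 < 1 + ⟪lam, v i⟫)
    (heq : ∑ i, (1 + ⟪lam, v i⟫)⁻¹ • v i = (0 : EuclideanSpace ℝ (Fin r))) :
    0 ≤ ⟪‖lam‖⁻¹ • lam, (n : ℝ)⁻¹ • ∑ i, v i⟫ ∧
    ‖lam‖ * ((n : ℝ)⁻¹ * ∑ i, ⟪‖lam‖⁻¹ • lam, v i⟫ ^ 2 -
        (Finset.univ.sup' ⟨⟨0, hn⟩, Finset.mem_univ _⟩ fun i => ‖v i‖) *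
          ⟪‖lam‖⁻¹ • lam, (n : ℝ)⁻¹ • ∑ i, v i⟫) ≤
      ⟪‖lam‖⁻¹ • lam, (n : ℝ)⁻¹ • ∑ i, v i⟫ := by
  have hL : 0 < ‖lam‖ := norm_pos_iff.mpr hlam
  have hn' : (0 : ℝ) < (n : ℝ)⁻¹ := inv_pos.mpr (by exact_mod_cast hn)
  set Z := Finset.univ.sup' ⟨⟨0, hn⟩, Finset.mem_univ _⟩ fun i => ‖v i‖ with hZ
  have hZle : ∀ i, ‖v i‖ ≤ Z := fun i =>
    Finset.le_sup' (fun i => ‖v i‖) (Finset.mem_univ i)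
  set L := ‖lam‖ with hLdef
  set u := L⁻¹ • lam with hu
  have hlu : lam = L • u := by rw [hu, smul_smul, mul_inv_cancel₀ hL.ne', one_smul]
  have hun : ‖u‖ = 1 := by
    rw [hu, norm_smul, norm_inv, Real.norm_of_nonneg hL.le, ← hLdef, inv_mul_cancel₀ hL.ne']
  have hin : ∀ i, ⟪lam, v i⟫ = L * ⟪u, v i⟫ := fun i => by
    conv_lhs => rw [hlu]
    rw [real_inner_smul_left]
  have hsum : ∑ i, (1 + L * ⟪u, v i⟫)⁻¹ * ⟪u, v i⟫ = 0 := by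
    have h := congrArg (fun w => ⟪u, w⟫) heq
    simpa only [inner_sum, real_inner_smul_right, inner_zero_right, hin] using h
  simp only [hin] at hpos
  rw [real_inner_smul_right, inner_sum]
  have hid : ∑ i, ⟪u, v i⟫ = ∑ i, L * ⟪u, v i⟫ ^ 2 / (1 + L * ⟪u, v i⟫) := by
    rw [← sub_zero (∑ i, ⟪u, v i⟫), ← hsum, ← Finset.sum_sub_distrib]
    refine Finset.sum_congr rfl fun i _ => ?_
    have := (hpos i).ne'
    clear_value L
    generalize ⟪u, v i⟫ = a at this ⊢
    rw [eq_div_iff this, sub_mul, mul_right_comm, inv_mul_cancel₀ this]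
    ring
  have h0 : 0 ≤ ∑ i, ⟪u, v i⟫ := by
    rw [hid]
    exact Finset.sum_nonneg fun i _ => div_nonneg (by positivity) (hpos i).le
  have h1 : L * ∑ i, ⟪u, v i⟫ ^ 2 ≤ (1 + L * Z) * ∑ i, ⟪u, v i⟫ := by
    rw [hid, Finset.mul_sum, Finset.mul_sum]
    refine Finset.sum_le_sum fun i _ => ?_
    rw [← mul_div_assoc, le_div_iff₀ (hpos i), mul_comm]
    refine mul_le_mul_of_nonneg_right ?_ (by positivity)
    have h2 : ⟪u, v i⟫ ≤ Z := by
      have := real_inner_le_norm u (v i)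
      rw [hun, one_mul] at this
      exact this.trans (hZle i)
    gcongr
  refine ⟨mul_nonneg hn'.le h0, ?_⟩
  have h3 := mul_le_mul_of_nonneg_left h1 hn'.le
  linarith
end
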